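/- Let n ≥ 1 be an integer. If some prime q ≡ 3 (mod 4) divides n to an odd power, then r(n) = 0. Otherwise, r(n) = 4 · Π_{p | n, p prime, p ≡ 1 (mod 4)} (ν_p(n) + 1), where ν_p(n) is the multiplicity of p in n. In particular the number of representations of n as a sum of two integer squares does not depend on the power of 2 dividing n, nor on the (even) powers of primes congruent to 3 mod 4. -/

import Mathlib

/-- The set of lattice points `(x, y) ∈ ℤ²` with `x² + y² = n`. -/
noncomputable def latticeCircle (n : ℕ) : Finset (ℤ × ℤ) :=
  (Finset.Icc (-(n : ℤ)) (n : ℤ) ×ˢ Finset.Icc (-(n : ℤ)) (n : ℤ)).filter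
    (fun p => p.1 ^ 2 + p.2 ^ 2 = (n : ℤ))

/-- `r n` is the number of lattice points on the circle of squared radius `n`. -/
noncomputable def latticeR (n : ℕ) : ℕ := (latticeCircle n).card

/-!
The number of elements of norm `n` in `ℤ[i]` is computed one prime power of `n` at a time. Suppose
that `c` is a prime element of norm `N`. If `N ∣ norm z`, then `c ∣ z * star z`, so `c` or `star c`
divides `z`.
* If `c ∣ star c` (as for `1 + i`, and for a rational prime congruent to `3` modulo `4`), then
  multiplication by `c` is a bijection from the elements of norm `m` onto those of norm `N * m`.
  If moreover `c` is a rational prime `q`, then `q ∣ norm z` forces `q ^ 2 ∣ norm z`.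
* If `c ∤ star c` and `N ∤ m` (as for the factors of a rational prime congruent to `1` modulo `4`),
  then each element of norm `N ^ k * m` is uniquely `c ^ i * star c ^ j * w` with `i + j = k` and
  `w` of norm `m`, which accounts for a factor `k + 1`.
-/

section Arithmetic

theorem eq_and_eq_of_pow_mul_eq_pow_mul {M : Type*} [CommMonoidWithZero M] [IsCancelMulZero M]
    {c u v : M} {i j : ℕ} (hc : c ≠ 0) (hu : ¬ c ∣ u) (hv : ¬ c ∣ v)
    (h : c ^ i * u = c ^ j * v) : i = j ∧ u = v := by
  have multiplicity_pow_mul (k : ℕ) {w : M} (hw : ¬ c ∣ w) : multiplicity c (c ^ k * w) = k :=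
    multiplicity_eq_of_dvd_of_not_dvd (dvd_mul_right _ _)
      (by rwa [pow_succ, mul_dvd_mul_iff_left (pow_ne_zero k hc)])
  obtain rfl : i = j := by rw [← multiplicity_pow_mul i hu, h, multiplicity_pow_mul j hv]
  exact ⟨rfl, mul_left_cancel₀ (pow_ne_zero i hc) h⟩

theorem eq_factorization_prod_mul {M : Type*} [CommMonoid M] {f : ℕ → M} {g : ℕ → ℕ → M}
    (hf : ∀ p k a : ℕ, p.Prime → 0 < k → ¬ p ∣ a → f (p ^ k * a) = g p k * f a)
    {n : ℕ} (hn : n ≠ 0) : f n = n.factorization.prod g * f 1 := by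
  induction n using Nat.recOnPrimePow with
  | zero => exact absurd rfl hn
  | one => simp
  | prime_pow_mul a p k hp hpa hk ih =>
    have hcop : (p ^ k).Coprime a := (hp.coprime_iff_not_dvd.2 hpa).pow_left k
    have hprod : (p ^ k * a).factorization.prod g = g p k * a.factorization.prod g := by
      rw [Nat.factorization_mul_of_coprime hcop,
        Finsupp.prod_add_index_of_disjoint hcop.disjoint_primeFactors, hp.factorization_pow]
      simp [Finsupp.prod, Finsupp.support_single p hk.ne']
    rw [hf p k a hp hk hpa, ih (right_ne_zero_of_mul hn), hprod, mul_assoc]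

end Arithmetic

section Zsqrtd

variable {d : ℤ} {c z : ℤ√d} {m n : ℤ} {k : ℕ}

theorem dvd_star_iff_star_dvd : c ∣ star z ↔ star c ∣ z := by
  simpa using (map_dvd_iff (starRingAut (R := ℤ√d)) (a := star c) (b := z))

theorem dvd_or_star_dvd_of_dvd_norm (hc : Prime c) (h : c ∣ (z.norm : ℤ√d)) :
    c ∣ z ∨ star c ∣ z := by
  rw [Zsqrtd.norm_eq_mul_conj] at h
  exact (hc.dvd_or_dvd h).imp_right dvd_star_iff_star_dvd.1

theorem norm_dvd_norm_of_dvd (h : c ∣ z) : c.norm ∣ z.norm :=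
  map_dvd Zsqrtd.normMonoidHom h

theorem irreducible_of_irreducible_norm (h : Irreducible c.norm) : Irreducible c :=
  haveI : IsLocalHom (Zsqrtd.normMonoidHom (d := d)) :=
    ⟨fun z hz => (Zsqrtd.isUnit_iff_norm_isUnit z).2 hz⟩
  Irreducible.of_map (f := Zsqrtd.normMonoidHom) h

/-- If `c ∣ star c`, then the prime `c.norm` ramifies, so it divides the discriminant `4 * d`. -/
theorem norm_dvd_two_mul_of_dvd_star (hN : Prime c.norm) (h : c ∣ star c) : c.norm ∣ 2 * d := by
  have htrace : c ∣ ((2 * c.re : ℤ) : ℤ√d) := by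
    rw [show ((2 * c.re : ℤ) : ℤ√d) = c + star c by ext <;> simp [two_mul]]
    exact dvd_add_self_left.2 h
  have hre : c.norm ∣ 2 * c.re := by
    have := norm_dvd_norm_of_dvd htrace
    rw [Zsqrtd.norm_intCast] at this
    exact (hN.dvd_or_dvd this).elim id id
  by_contra hnot
  rw [hN.dvd_mul, not_or] at hnot
  replace hre : c.norm ∣ c.re := (hN.dvd_or_dvd hre).resolve_left hnot.1
  have him : c.norm ∣ c.im := by
    have : c.norm ∣ d * c.im * c.im := by
      rw [← dvd_sub_right (hre.mul_right c.re), ← Zsqrtd.norm_def]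
    simpa [hN.dvd_mul, hnot.2] using this
  have hsq : c.norm * c.norm ∣ c.norm := by
    simpa [Zsqrtd.norm_intCast] using norm_dvd_norm_of_dvd ((Zsqrtd.intCast_dvd _ c).2 ⟨hre, him⟩)
  exact hN.not_isUnit
    (isUnit_of_dvd_one ((mul_dvd_mul_iff_left hN.ne_zero).1 (by rwa [mul_one])))

/-- The elements of `ℤ√d` of norm `n`. -/
def normFiber (d n : ℤ) : Set (ℤ√d) := {z | z.norm = n}

@[simp]
theorem mem_normFiber : z ∈ normFiber d n ↔ z.norm = n := Iff.rfl

theorem dvd_or_star_dvd_of_mem_normFiber (hc : Prime c) (hz : z ∈ normFiber d (c.norm * m)) :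
    c ∣ z ∨ star c ∣ z := by
  refine dvd_or_star_dvd_of_dvd_norm hc ?_
  rw [mem_normFiber.1 hz, Int.cast_mul, Zsqrtd.norm_eq_mul_conj, mul_assoc]
  exact dvd_mul_right _ _

theorem normFiber_mul_eq_empty {q : ℤ} (hq : Prime (q : ℤ√d)) (hm : ¬ q ∣ m) :
    normFiber d (q * m) = ∅ := by
  refine Set.eq_empty_of_forall_notMem fun z hz => hm ?_
  rw [mem_normFiber] at hz
  have hq0 : q ≠ 0 := by rintro rfl; exact hq.ne_zero Int.cast_zero
  have hqz : (q : ℤ√d) ∣ z := by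
    have hqnorm : (q : ℤ√d) ∣ (z.norm : ℤ√d) := by
      rw [hz, Int.cast_mul]
      exact dvd_mul_right _ _
    simpa using dvd_or_star_dvd_of_dvd_norm hq hqnorm
  have hqq : q * q ∣ q * m := by
    simpa [hz, Zsqrtd.norm_intCast] using norm_dvd_norm_of_dvd hqz
  exact (mul_dvd_mul_iff_left hq0).1 hqq

section IsDomain

variable [IsDomain (ℤ√d)]

theorem norm_ne_zero_of_ne_zero (hc : c ≠ 0) : c.norm ≠ 0 := by
  intro h
  have : c * star c = 0 := by rw [← Zsqrtd.norm_eq_mul_conj, h, Int.cast_zero]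
  simp [hc] at this

theorem mul_mem_normFiber_norm_mul_iff (hc : c ≠ 0) :
    c * z ∈ normFiber d (c.norm * m) ↔ z ∈ normFiber d m := by
  simp [norm_ne_zero_of_ne_zero hc]

theorem normFiber_norm_mul_eq_image (hc : Prime c) (hstar : c ∣ star c) (m : ℤ) :
    normFiber d (c.norm * m) = (c * ·) '' normFiber d m := by
  ext z
  constructor
  · intro hz
    obtain ⟨w, rfl⟩ : c ∣ z := (dvd_or_star_dvd_of_mem_normFiber hc hz).elim id hstar.trans
    exact ⟨w, (mul_mem_normFiber_norm_mul_iff hc.ne_zero).1 hz, rfl⟩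
  · rintro ⟨w, hw, rfl⟩
    exact (mul_mem_normFiber_norm_mul_iff hc.ne_zero).2 hw

theorem ncard_normFiber_norm_pow_mul_of_dvd_star (hc : Prime c) (hstar : c ∣ star c)
    (k : ℕ) (m : ℤ) : (normFiber d (c.norm ^ k * m)).ncard = (normFiber d m).ncard := by
  induction k with
  | zero => simp
  | succ k ih =>
    rw [pow_succ', mul_assoc, normFiber_norm_mul_eq_image hc hstar,
      Set.ncard_image_of_injective _ (mul_right_injective₀ hc.ne_zero), ih]

theorem exists_eq_pow_mul_star_pow_mul (hc : Prime c) (hz : z ∈ normFiber d (c.norm ^ k * m)) :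
    ∃ i j : ℕ, i + j = k ∧ ∃ w ∈ normFiber d m, c ^ i * star c ^ j * w = z := by
  induction k generalizing z with
  | zero => exact ⟨0, 0, rfl, z, by simpa using hz, by simp⟩
  | succ k ih =>
    rw [pow_succ', mul_assoc] at hz
    rcases dvd_or_star_dvd_of_mem_normFiber hc hz with ⟨y, rfl⟩ | ⟨y, rfl⟩
    · obtain ⟨i, j, rfl, w, hw, rfl⟩ := ih ((mul_mem_normFiber_norm_mul_iff hc.ne_zero).1 hz)
      exact ⟨i + 1, j, by ring, w, hw, by ring⟩
    · rw [← Zsqrtd.norm_conj c] at hz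
      obtain ⟨i, j, rfl, w, hw, rfl⟩ :=
        ih ((mul_mem_normFiber_norm_mul_iff (star_ne_zero.2 hc.ne_zero)).1 (by simpa using hz))
      exact ⟨i, j + 1, by ring, w, hw, by ring⟩

theorem bijOn_pow_mul_star_pow_mul (hc : Prime c) (hstar : ¬ c ∣ star c) (hm : ¬ c.norm ∣ m)
    (k : ℕ) :
    Set.BijOn (fun x : (ℕ × ℕ) × ℤ√d => c ^ x.1.1 * star c ^ x.1.2 * x.2)
      (Finset.HasAntidiagonal.antidiagonal k ×ˢ normFiber d m) (normFiber d (c.norm ^ k * m)) := by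
  refine ⟨?mapsTo, ?injOn, ?surjOn⟩
  case mapsTo =>
    rintro ⟨⟨i, j⟩, w⟩ ⟨hij, hw⟩
    obtain rfl : i + j = k := by simpa using hij
    have norm_pow (x : ℤ√d) (l : ℕ) : (x ^ l).norm = x.norm ^ l :=
      map_pow Zsqrtd.normMonoidHom x l
    simp_all [pow_add]
  case injOn =>
    have not_dvd (j : ℕ) {w : ℤ√d} (hw : w ∈ normFiber d m) : ¬ c ∣ star c ^ j * w := by
      rw [hc.dvd_mul, not_or]
      exact ⟨fun h => hstar (hc.dvd_of_dvd_pow h), fun h => hm (hw ▸ norm_dvd_norm_of_dvd h)⟩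
    rintro ⟨⟨i, j⟩, w⟩ ⟨hij, hw⟩ ⟨⟨i', j'⟩, w'⟩ ⟨hij', hw'⟩ h
    simp only [mul_assoc] at h
    obtain ⟨rfl, hrest⟩ :=
      eq_and_eq_of_pow_mul_eq_pow_mul hc.ne_zero (not_dvd j hw) (not_dvd j' hw') h
    have hsum : i + j = k := by simpa using hij
    have hsum' : i + j' = k := by simpa using hij'
    obtain rfl : j = j' := Nat.add_left_cancel (hsum.trans hsum'.symm)
    obtain rfl : w = w' := mul_left_cancel₀ (pow_ne_zero j (star_ne_zero.2 hc.ne_zero)) hrest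
    rfl
  case surjOn =>
    intro z hz
    obtain ⟨i, j, hij, w, hw, rfl⟩ := exists_eq_pow_mul_star_pow_mul hc hz
    exact ⟨((i, j), w), ⟨by simpa using hij, hw⟩, rfl⟩

theorem ncard_normFiber_norm_pow_mul_of_not_dvd_star (hc : Prime c) (hstar : ¬ c ∣ star c)
    (hm : ¬ c.norm ∣ m) (k : ℕ) :
    (normFiber d (c.norm ^ k * m)).ncard = (k + 1) * (normFiber d m).ncard := by
  have h := bijOn_pow_mul_star_pow_mul hc hstar hm k
  rw [← h.image_eq, h.injOn.ncard_image, Set.ncard_prod, Set.ncard_coe_finset,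
    Finset.Nat.card_antidiagonal]

end IsDomain

end Zsqrtd

section LatticePoints

variable {p : ℕ}

theorem mem_latticeCircle {n : ℕ} {x : ℤ × ℤ} :
    x ∈ latticeCircle n ↔ x.1 ^ 2 + x.2 ^ 2 = n := by
  simp only [latticeCircle, Finset.mem_filter, Finset.mem_product, Finset.mem_Icc,
    and_iff_right_iff_imp, ← abs_le]
  intro h
  have abs_le_sq (a : ℤ) : |a| ≤ a ^ 2 := sq_abs a ▸ Int.le_self_sq |a|
  exact ⟨by linarith [abs_le_sq x.1, sq_nonneg x.2], by linarith [abs_le_sq x.2, sq_nonneg x.1]⟩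

theorem latticeR_eq_ncard_normFiber (n : ℕ) : latticeR n = (normFiber (-1) n).ncard := by
  have himage : (latticeCircle n : Set (ℤ × ℤ)) =
      (fun z : GaussianInt => (z.re, z.im)) '' normFiber (-1) n := by
    ext ⟨x, y⟩
    rw [Finset.mem_coe, mem_latticeCircle]
    constructor
    · intro h
      exact ⟨⟨x, y⟩, by rw [mem_normFiber, Zsqrtd.norm_def]; linarith, rfl⟩
    · rintro ⟨z, hz, hxy⟩
      cases hxy
      rw [mem_normFiber, Zsqrtd.norm_def] at hz
      linarith
  rw [latticeR, ← Set.ncard_coe_finset, himage, Set.ncard_image_of_injective]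
  exact fun z w h => Zsqrtd.ext (congrArg Prod.fst h) (congrArg Prod.snd h)

theorem latticeR_one : latticeR 1 = 4 := by
  unfold latticeR latticeCircle
  decide

theorem prime_of_prime_norm {c : GaussianInt} (h : Prime c.norm) : Prime c :=
  (irreducible_of_irreducible_norm h.irreducible).prime

theorem latticeR_two_pow_mul (k m : ℕ) : latticeR (2 ^ k * m) = latticeR m := by
  let c : GaussianInt := ⟨1, 1⟩
  have hN : c.norm = 2 := rfl
  have hc : Prime c := prime_of_prime_norm (hN ▸ Int.prime_two)
  have hstar : c ∣ star c := ⟨⟨0, -1⟩, rfl⟩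
  simpa [latticeR_eq_ncard_normFiber, hN] using
    ncard_normFiber_norm_pow_mul_of_dvd_star hc hstar k m

theorem latticeR_pow_mul_of_mod_four_eq_one (hp : p.Prime) (h1 : p % 4 = 1) (k : ℕ) {m : ℕ}
    (hm : ¬ p ∣ m) : latticeR (p ^ k * m) = (k + 1) * latticeR m := by
  have := Fact.mk hp
  obtain ⟨a, b, hab⟩ := Nat.Prime.sq_add_sq (p := p) (by omega)
  let c : GaussianInt := ⟨a, b⟩
  have hN : c.norm = p := by rw [Zsqrtd.norm_def, ← hab]; push_cast; ring
  have hNprime : Prime c.norm := hN ▸ Nat.prime_iff_prime_int.1 hp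
  have hstar : ¬ c ∣ star c := by
    intro h
    have hdvd : (p : ℤ) ∣ 2 := by simpa [hN] using norm_dvd_two_mul_of_dvd_star hNprime h
    obtain rfl : p = 2 := (Nat.prime_dvd_prime_iff_eq hp Nat.prime_two).1 (mod_cast hdvd)
    omega
  have hcount := ncard_normFiber_norm_pow_mul_of_not_dvd_star (prime_of_prime_norm hNprime) hstar
    (m := m) (by rw [hN]; exact_mod_cast hm) k
  simpa [latticeR_eq_ncard_normFiber, hN] using hcount

theorem latticeR_sq_pow_mul_of_mod_four_eq_three (hp : p.Prime) (h3 : p % 4 = 3) (k m : ℕ) :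
    latticeR ((p ^ 2) ^ k * m) = latticeR m := by
  have := Fact.mk hp
  have hprime := GaussianInt.prime_of_nat_prime_of_mod_four_eq_three p h3
  have hcount := ncard_normFiber_norm_pow_mul_of_dvd_star hprime (by simp) k m
  simpa [latticeR_eq_ncard_normFiber, ← sq] using hcount

theorem latticeR_mul_eq_zero_of_mod_four_eq_three (hp : p.Prime) (h3 : p % 4 = 3) {m : ℕ}
    (hm : ¬ p ∣ m) : latticeR (p * m) = 0 := by
  have := Fact.mk hp
  have hprime := GaussianInt.prime_of_nat_prime_of_mod_four_eq_three p h3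
  have hempty := normFiber_mul_eq_empty (d := -1) (q := p) (m := m) (by simpa using hprime)
    (by exact_mod_cast hm)
  simp [latticeR_eq_ncard_normFiber, hempty]

/-- The factor contributed to `latticeR n` by a prime `p` of multiplicity `k` in `n`, namely the sum
`∑ i ≤ k, χ (p ^ i)` for the nontrivial Dirichlet character `χ` modulo `4`, evaluated according to
the residue of `p`. -/
def localFactor (p k : ℕ) : ℕ :=
  if p % 4 = 1 then k + 1 else if p % 4 = 3 ∧ Odd k then 0 else 1

theorem latticeR_prime_pow_mul (hp : p.Prime) (k : ℕ) {m : ℕ} (hm : ¬ p ∣ m) :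
    latticeR (p ^ k * m) = localFactor p k * latticeR m := by
  unfold localFactor
  split_ifs with h1 h3
  · exact latticeR_pow_mul_of_mod_four_eq_one hp h1 k hm
  · obtain ⟨h3, l, rfl⟩ := h3
    rw [pow_succ, pow_mul, mul_assoc, latticeR_sq_pow_mul_of_mod_four_eq_three hp h3,
      latticeR_mul_eq_zero_of_mod_four_eq_three hp h3 hm, zero_mul]
  · rw [one_mul]
    rcases hp.eq_two_or_odd with rfl | hodd
    · exact latticeR_two_pow_mul k m
    · have hp3 : p % 4 = 3 := by omega
      obtain ⟨l, rfl⟩ := even_iff_exists_two_mul.1 (Nat.not_odd_iff_even.1 fun hk => h3 ⟨hp3, hk⟩)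
      rw [pow_mul, latticeR_sq_pow_mul_of_mod_four_eq_three hp hp3]

theorem latticeR_eq_four_mul_prod_localFactor {n : ℕ} (hn : n ≠ 0) :
    latticeR n = 4 * n.factorization.prod localFactor := by
  rw [eq_factorization_prod_mul (fun p k a hp _ ha => latticeR_prime_pow_mul hp k ha) hn,
    latticeR_one, mul_comm]

end LatticePoints

/-- If some prime `q ≡ 3 (mod 4)` divides `n` to an odd power then `r(n) = 0`;
otherwise `r(n) = 4 Π_{p ∣ n, p ≡ 1 (mod 4)} (ν_p(n) + 1)`. -/
theorem latticeR_formula (n : ℕ) (hn : 1 ≤ n) :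
    ((∃ q : ℕ, q.Prime ∧ q % 4 = 3 ∧ Odd (n.factorization q)) → latticeR n = 0) ∧
    (¬ (∃ q : ℕ, q.Prime ∧ q % 4 = 3 ∧ Odd (n.factorization q)) →
      latticeR n = 4 * ∏ p ∈ n.primeFactors.filter (fun p => p % 4 = 1),
        (n.factorization p + 1)) := by
  rw [latticeR_eq_four_mul_prod_localFactor (Nat.one_le_iff_ne_zero.1 hn), Finsupp.prod,
    Nat.support_factorization]
  refine ⟨?_, fun h => ?_⟩
  · rintro ⟨q, -, h3, hodd⟩
    have hmem : q ∈ n.primeFactors := Finsupp.mem_support_iff.2 hodd.pos.ne'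
    rw [Finset.prod_eq_zero hmem (by simp [localFactor, h3, hodd]), mul_zero]
  · rw [Finset.prod_filter]
    congr 1
    refine Finset.prod_congr rfl fun p hp => ?_
    have hfactor : ¬ (p % 4 = 3 ∧ Odd (n.factorization p)) :=
      fun hodd => h ⟨p, Nat.prime_of_mem_primeFactors hp, hodd⟩
    rw [localFactor, if_neg hfactor]
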